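/- arXiv:1903.06114 — 6 statements merged into one kernel-verified Lean document; each statement's English description precedes it below -/
import Mathlib

section
/- Let p ≥ 1 and m ≥ 1 be integers and write m = k·2^z with k odd. Let L be the language over the alphabet {0,…,2^p−1} consisting of all words w (leading zeros allowed) such that val_{2^p}(w) ∈ m·T, where T is the Thue–Morse set. Then the set of left quotients {w⁻¹L : w a word over {0,…,2^p−1}} (where w⁻¹L = {u : w·u ∈ L}) has exactly 2k + ⌈z/p⌉ elements; that is, the state complexity of m·T with respect to the base 2^p equals 2k + ⌈z/p⌉. -/
/-- The parity (in `ZMod 2`) of the number of 1s in the binary expansion of `n`. -/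
def sTM (n : ℕ) : ZMod 2 := ((Nat.digits 2 n).count 1 : ZMod 2)

/-- The Thue–Morse set: natural numbers with an even number of 1s in base 2. -/
def ThueMorse : Set ℕ := {n | sTM n = 0}

/-- The value of a word over `{0,…,b-1}` (most significant digit first) in base `b`. -/
def valb (b : ℕ) (w : List (Fin b)) : ℕ := w.foldl (fun a d => b * a + d.val) 0

/-- The left quotient of a language by a word. -/
def leftQuot {α : Type*} (L : Set (List α)) (w : List α) : Set (List α) := {u | w ++ u ∈ L}

/-!
A word of value `n` has the left quotient `{u | n * b ^ |u| + val u ∈ m · T}`, where `b = 2 ^ p`, so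
left quotients correspond to numbers `n` up to agreement on all suffixes `u`.

Write `n = k * J + i` with `i < k`. On suffixes of at least `z` bits, the binary digits that `J`
contributes to the factor `t` in `n * b ^ |u| + val u = m * t` do not overlap those coming from `i`
and `u`, so only `i` and the parity of `J` matter. Both are determined by the quotient, because
every long enough interval meets `m · T` and `k` is odd. A suffix of fewer than `z` bits can only be
accepted if it consists of zeros, and then only from `n ∈ k · T`, that is, `i = 0` and `J ∈ T`. The
number of zeros needed is the third invariant: on `k · T` it takes all values from `0` to `⌈z / p⌉`,
and elsewhere it is set to `0`. This gives `2 * k` quotients with third invariant `0` and `⌈z / p⌉`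
further ones.
-/

theorem ncard_range_eq_of_ker_eq {α β γ : Type*} {f : α → β} {g : α → γ}
    (h : Setoid.ker f = Setoid.ker g) : (Set.range f).ncard = (Set.range g).ncard :=
  Nat.card_congr <| (Setoid.quotientKerEquivRange f).symm.trans <|
    (Quotient.congrRight fun _ _ => by rw [h]).trans (Setoid.quotientKerEquivRange g)

section Parity

theorem sTM_zero : sTM 0 = 0 := by simp [sTM]

theorem sTM_one : sTM 1 = 1 := by simp [sTM]

theorem sTM_three : sTM 3 = 0 := by
  rw [sTM, show (Nat.digits 2 3).count 1 = 2 by simp]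
  rfl

theorem sTM_two_pow_mul_add {N s : ℕ} (hs : s < 2 ^ N) (a : ℕ) :
    sTM (2 ^ N * a + s) = sTM a + sTM s := by
  rcases Nat.eq_zero_or_pos a with rfl | ha
  · simp [sTM_zero]
  · obtain ⟨j, hj⟩ : ∃ j, N = (Nat.digits 2 s).length + j :=
      Nat.exists_eq_add_of_le ((Nat.digits_length_le_iff one_lt_two s).2 hs)
    have hdigits : Nat.digits 2 (2 ^ N * a + s) =
        Nat.digits 2 s ++ List.replicate j 0 ++ Nat.digits 2 a := by
      rw [Nat.digits_append_zeroes_append_digits one_lt_two ha, hj, add_comm]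
    rw [sTM, hdigits]
    simp [sTM, List.count_replicate, add_comm]

theorem sTM_two_pow_mul (N a : ℕ) : sTM (2 ^ N * a) = sTM a := by
  simpa [sTM_zero] using sTM_two_pow_mul_add (Nat.two_pow_pos N) a

theorem exists_mem_Icc_sTM_eq_zero (d : ℕ) : ∃ s ∈ Set.Icc (2 * d) (2 * d + 1), sTM s = 0 := by
  have heven : sTM (2 * d) = sTM d := by simpa using sTM_two_pow_mul 1 d
  have hodd : sTM (2 * d + 1) = sTM d + 1 := by
    simpa [sTM_one] using sTM_two_pow_mul_add (N := 1) one_lt_two d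
  have hparity : sTM d = 0 ∨ sTM d + 1 = 0 := by
    generalize sTM d = a
    revert a
    decide
  rcases hparity with h | h
  · exact ⟨2 * d, ⟨le_rfl, by lia⟩, heven.trans h⟩
  · exact ⟨2 * d + 1, ⟨by lia, le_rfl⟩, hodd.trans h⟩

end Parity

section Multiples

variable {k m z N n v : ℕ}

/-- The set `m · T` of the `m`-fold multiples of the elements of the Thue–Morse set. The pointwise
notation `m • ThueMorse` is avoided as it can also mean the `m`-fold sumset. -/
def mulThueMorse (m : ℕ) : Set ℕ :=
  {n | ∃ t ∈ ThueMorse, n = m * t}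

theorem mem_mulThueMorse (hm : 0 < m) : n ∈ mulThueMorse m ↔ m ∣ n ∧ sTM (n / m) = 0 := by
  constructor
  · rintro ⟨t, ht, rfl⟩
    exact ⟨dvd_mul_right m t, by rwa [Nat.mul_div_cancel_left t hm]⟩
  · rintro ⟨⟨t, rfl⟩, ht⟩
    rw [Nat.mul_div_cancel_left t hm] at ht
    exact ⟨t, ht, rfl⟩

theorem mul_mem_mulThueMorse (hm : 0 < m) : m * n ∈ mulThueMorse m ↔ sTM n = 0 := by
  simp [mem_mulThueMorse hm, hm]

theorem exists_mem_Icc_mem_mulThueMorse (hm : 0 < m) (a : ℕ) :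
    ∃ x ∈ Set.Icc a (a + 3 * m), x ∈ mulThueMorse m := by
  obtain ⟨s, ⟨hs₁, hs₂⟩, hs⟩ := exists_mem_Icc_sTM_eq_zero (a / m / 2 + 1)
  refine ⟨m * s, ⟨?_, ?_⟩, (mul_mem_mulThueMorse hm).2 hs⟩
  · calc
      a ≤ m * (a / m + 1) := (Nat.lt_mul_div_succ a hm).le
      _ ≤ m * s := Nat.mul_le_mul_left m (by lia)
  · calc
      m * s ≤ m * (a / m + 3) := Nat.mul_le_mul_left m (by lia)
      _ = m * (a / m) + 3 * m := by ring
      _ ≤ a + 3 * m := Nat.add_le_add_right (Nat.mul_div_le a m) _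

theorem mul_add_mem_mulThueMorse {r : ℕ} (hm : 0 < m) (hr : r < m * 2 ^ N) (J : ℕ) :
    m * (2 ^ N * J) + r ∈ mulThueMorse m ↔ m ∣ r ∧ sTM (r / m) = sTM J := by
  rw [mem_mulThueMorse hm, Nat.dvd_add_right (dvd_mul_right _ _), Nat.mul_add_div hm,
    sTM_two_pow_mul_add (Nat.div_lt_of_lt_mul hr), CharTwo.add_eq_zero, eq_comm (a := sTM J)]

theorem mul_two_pow_add_mem_mulThueMorse (hk : 0 < k) (hz : z ≤ N) (hv : v < 2 ^ N) :
    n * 2 ^ N + v ∈ mulThueMorse (k * 2 ^ z) ↔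
      k * 2 ^ z ∣ n % k * 2 ^ N + v ∧ sTM ((n % k * 2 ^ N + v) / (k * 2 ^ z)) = sTM (n / k) := by
  obtain ⟨M, rfl⟩ := Nat.exists_eq_add_of_le hz
  have hsplit : n * 2 ^ (z + M) + v =
      k * 2 ^ z * (2 ^ M * (n / k)) + (n % k * 2 ^ (z + M) + v) := by
    nth_rw 1 [← Nat.div_add_mod n k]
    ring
  have hsmall : n % k * 2 ^ (z + M) + v < k * 2 ^ z * 2 ^ M := by
    calc
      n % k * 2 ^ (z + M) + v < (n % k + 1) * 2 ^ (z + M) := by lia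
      _ ≤ k * 2 ^ (z + M) := Nat.mul_le_mul_right _ (Nat.mod_lt n hk)
      _ = k * 2 ^ z * 2 ^ M := by ring
  rw [hsplit, mul_add_mem_mulThueMorse (by positivity) hsmall]

theorem eq_zero_of_mul_add_mem_mulThueMorse {b : ℕ} (hb : b ∣ m) (hv : v < b)
    (h : n * b + v ∈ mulThueMorse m) : v = 0 := by
  obtain ⟨t, -, ht⟩ := h
  have hdvd : b ∣ n * b + v := ht ▸ hb.mul_right t
  exact Nat.eq_zero_of_dvd_of_lt ((Nat.dvd_add_right (dvd_mul_left b n)).1 hdvd) hv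

theorem mod_eq_mod_of_mem_mulThueMorse {n' : ℕ} (hk : Odd k)
    (h : n * 2 ^ N + v ∈ mulThueMorse (k * 2 ^ z))
    (h' : n' * 2 ^ N + v ∈ mulThueMorse (k * 2 ^ z)) : n % k = n' % k := by
  have hzero {x : ℕ} (hx : x ∈ mulThueMorse (k * 2 ^ z)) : x ≡ 0 [MOD k] := by
    obtain ⟨t, -, rfl⟩ := hx
    exact Nat.modEq_zero_iff_dvd.2 ((dvd_mul_right k _).mul_right t)
  have hmul : n * 2 ^ N ≡ n' * 2 ^ N [MOD k] :=
    Nat.ModEq.add_right_cancel' v ((hzero h).trans (hzero h').symm)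
  exact hmul.cancel_right_of_coprime ((Nat.coprime_two_right.2 hk).pow_right N)

theorem mul_two_pow_mem_mulThueMorse (hk : Odd k) :
    n * 2 ^ N ∈ mulThueMorse (k * 2 ^ z) ↔ n ∈ mulThueMorse k ∧ 2 ^ z ∣ n * 2 ^ N := by
  have hcop (e : ℕ) : k.Coprime (2 ^ e) := (Nat.coprime_two_right.2 hk).pow_right e
  have hparity : k ∣ n → 2 ^ z ∣ n * 2 ^ N →
      sTM (n * 2 ^ N / (k * 2 ^ z)) = sTM (n / k) := by
    rintro ⟨a, rfl⟩ hz
    rw [mul_assoc] at hz ⊢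
    obtain ⟨t, ht⟩ := (hcop z).symm.dvd_of_dvd_mul_left hz
    rw [ht, ← mul_assoc, Nat.mul_div_cancel_left _ (Nat.mul_pos hk.pos (Nat.two_pow_pos z)),
      Nat.mul_div_cancel_left _ hk.pos, ← sTM_two_pow_mul z, ← ht, mul_comm, sTM_two_pow_mul]
  rw [mem_mulThueMorse (Nat.mul_pos hk.pos (Nat.two_pow_pos z)), mem_mulThueMorse hk.pos]
  constructor
  · rintro ⟨hdvd, hs⟩
    have hkn : k ∣ n := (hcop N).dvd_of_dvd_mul_right ((dvd_mul_right _ _).trans hdvd)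
    have hz : 2 ^ z ∣ n * 2 ^ N := (dvd_mul_left _ _).trans hdvd
    exact ⟨⟨hkn, (hparity hkn hz).symm.trans hs⟩, hz⟩
  · rintro ⟨⟨hkn, hs⟩, hz⟩
    exact ⟨(hcop z).mul_dvd_of_dvd_of_dvd (hkn.mul_right _) hz, (hparity hkn hz).trans hs⟩

end Multiples

section Words

variable {b : ℕ}

theorem valb_eq_ofDigits (w : List (Fin b)) :
    valb b w = Nat.ofDigits b (w.reverse.map Fin.val) := by
  simp [valb, Nat.ofDigits_eq_foldr, List.foldl_map, add_comm]

theorem valb_append (w u : List (Fin b)) :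
    valb b (w ++ u) = valb b w * b ^ u.length + valb b u := by
  simp [valb_eq_ofDigits, Nat.ofDigits_append, add_comm, mul_comm]

theorem valb_lt (hb : 1 < b) (u : List (Fin b)) : valb b u < b ^ u.length := by
  rw [valb_eq_ofDigits]
  simpa using Nat.ofDigits_lt_base_pow_length (l := u.reverse.map Fin.val) hb (by simp)

theorem exists_valb_eq (hb : 1 < b) {l v : ℕ} (hv : v < b ^ l) :
    ∃ u : List (Fin b), u.length = l ∧ valb b u = v := by
  obtain ⟨ds, ⟨hlen, hlt⟩, hds⟩ := (Nat.bijOn_ofDigits hb l).surjOn hv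
  lift ds to List (Fin b) using hlt
  exact ⟨ds.reverse, by simpa using hlen, by simpa [valb_eq_ofDigits] using hds⟩

/-- The left quotient, by any word of value `n`, of the language of base-`b` words with value in
`X`. -/
def valQuot (b : ℕ) (X : Set ℕ) (n : ℕ) : Set (List (Fin b)) :=
  {u | n * b ^ u.length + valb b u ∈ X}

theorem valQuot_eq_iff (hb : 1 < b) {X : Set ℕ} {n n' : ℕ} :
    valQuot b X n = valQuot b X n' ↔
      ∀ l, ∀ v < b ^ l, (n * b ^ l + v ∈ X ↔ n' * b ^ l + v ∈ X) := by
  constructor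
  · intro h l v hv
    obtain ⟨u, rfl, rfl⟩ := exists_valb_eq hb hv
    exact Set.ext_iff.1 h u
  · intro h
    ext u
    exact h u.length (valb b u) (valb_lt hb u)

theorem setOf_leftQuot_eq_range_valQuot (hb : 1 < b) (X : Set ℕ) :
    {Q | ∃ w, Q = leftQuot {w | valb b w ∈ X} w} = Set.range (valQuot b X) := by
  have hquot (w : List (Fin b)) : leftQuot {w | valb b w ∈ X} w = valQuot b X (valb b w) := by
    simp [leftQuot, valQuot, valb_append]
  have hsurj : Function.Surjective (valb b) := fun n =>
    (exists_valb_eq hb (Nat.lt_pow_self hb)).imp fun _ => And.right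
  simp_rw [hquot, eq_comm (b := valQuot b X _)]
  exact hsurj.range_comp (valQuot b X)

/-- The least number of zeros which, appended to the base-`b` expansion of `n`, produce an element
of `X`. It is `0` if there is no such number, as `sInf ∅ = 0`. -/
noncomputable def zeroDelay (b : ℕ) (X : Set ℕ) (n : ℕ) : ℕ :=
  sInf {l | n * b ^ l ∈ X}

theorem zeroDelay_eq_of_valQuot_eq (hb : 1 < b) {X : Set ℕ} {n n' : ℕ}
    (h : valQuot b X n = valQuot b X n') : zeroDelay b X n = zeroDelay b X n' := by
  have hzeros (l : ℕ) : n * b ^ l ∈ X ↔ n' * b ^ l ∈ X := by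
    simpa using (valQuot_eq_iff hb).1 h l 0 (by positivity)
  simp only [zeroDelay, hzeros]

end Words

section ZeroDelay

variable {p k z n : ℕ}

theorem zeroDelay_zero (b m : ℕ) : zeroDelay b (mulThueMorse m) 0 = 0 := by
  have hmem : 0 ∈ mulThueMorse m := ⟨0, sTM_zero, rfl⟩
  simp [zeroDelay, hmem]

theorem zeroDelay_of_notMem (hk : Odd k) (hn : n ∉ mulThueMorse k) :
    zeroDelay (2 ^ p) (mulThueMorse (k * 2 ^ z)) n = 0 := by
  simp [zeroDelay, ← pow_mul, mul_two_pow_mem_mulThueMorse hk, hn]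

theorem mul_pow_ceilDiv_mem_mulThueMorse (hp : 0 < p) (hn : n ∈ mulThueMorse k) :
    n * (2 ^ p) ^ (z ⌈/⌉ p) ∈ mulThueMorse (k * 2 ^ z) := by
  obtain ⟨t, ht, rfl⟩ := hn
  obtain ⟨j, hj⟩ : ∃ j, p * (z ⌈/⌉ p) = z + j := Nat.exists_eq_add_of_le (le_smul_ceilDiv hp)
  refine ⟨2 ^ j * t, (sTM_two_pow_mul j t).trans ht, ?_⟩
  rw [← pow_mul, hj]
  ring

theorem zeroDelay_le_ceilDiv (hp : 0 < p) (hk : Odd k) :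
    zeroDelay (2 ^ p) (mulThueMorse (k * 2 ^ z)) n ≤ z ⌈/⌉ p := by
  by_cases hn : n ∈ mulThueMorse k
  · exact Nat.sInf_le (mul_pow_ceilDiv_mem_mulThueMorse hp hn)
  · simp [zeroDelay_of_notMem hk hn]

theorem mul_pow_mem_mulThueMorse_iff (hp : 0 < p) (hk : Odd k) {l : ℕ} :
    n * (2 ^ p) ^ l ∈ mulThueMorse (k * 2 ^ z) ↔
      n ∈ mulThueMorse k ∧ zeroDelay (2 ^ p) (mulThueMorse (k * 2 ^ z)) n ≤ l := by
  constructor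
  · intro h
    refine ⟨?_, Nat.sInf_le h⟩
    rw [← pow_mul, mul_two_pow_mem_mulThueMorse hk] at h
    exact h.1
  · rintro ⟨hn, hl⟩
    have hne : {l | n * (2 ^ p) ^ l ∈ mulThueMorse (k * 2 ^ z)}.Nonempty :=
      ⟨z ⌈/⌉ p, mul_pow_ceilDiv_mem_mulThueMorse hp hn⟩
    have hmin : n * (2 ^ p) ^ zeroDelay (2 ^ p) (mulThueMorse (k * 2 ^ z)) n ∈
        mulThueMorse (k * 2 ^ z) := Nat.sInf_mem hne
    rw [← pow_mul, mul_two_pow_mem_mulThueMorse hk] at hmin ⊢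
    exact ⟨hn, hmin.2.trans (mul_dvd_mul_left n (pow_dvd_pow 2 (Nat.mul_le_mul_left p hl)))⟩

theorem zeroDelay_mul_two_pow_mul {t : ℕ} (hp : 0 < p) (hk : Odd k) (ht : Odd t) (hs : sTM t = 0)
    (c : ℕ) : zeroDelay (2 ^ p) (mulThueMorse (k * 2 ^ z)) (k * (2 ^ c * t)) = (z - c) ⌈/⌉ p := by
  have hmem : k * (2 ^ c * t) ∈ mulThueMorse k := by
    rw [mul_mem_mulThueMorse hk.pos, sTM_two_pow_mul, hs]
  have hdvd (l : ℕ) : 2 ^ z ∣ k * (2 ^ c * t) * 2 ^ (p * l) ↔ (z - c) ⌈/⌉ p ≤ l := by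
    have hcop : Nat.Coprime (2 ^ z) (k * t) := (Nat.coprime_two_left.2 (hk.mul ht)).pow_left z
    rw [show k * (2 ^ c * t) * 2 ^ (p * l) = 2 ^ (c + p * l) * (k * t) by ring,
      hcop.dvd_mul_right, Nat.pow_dvd_pow_iff_le_right one_lt_two, ceilDiv_le_iff_le_mul hp,
      Nat.sub_le_iff_le_add']
  simp only [zeroDelay, ← pow_mul, mul_two_pow_mem_mulThueMorse hk, hmem, true_and, hdvd]
  exact csInf_Ici

theorem sub_sub_mul_ceilDiv {l : ℕ} (hp : 0 < p) (hl : l ≤ z ⌈/⌉ p) :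
    (z - (z - p * l)) ⌈/⌉ p = l := by
  refine eq_of_forall_ge_iff fun c => ?_
  rw [ceilDiv_le_iff_le_mul hp]
  rcases le_or_gt l c with hlc | hcl
  · have hmul : p * l ≤ p * c := Nat.mul_le_mul_left p hlc
    exact iff_of_true (by lia) hlc
  · have hcz : p * c < z :=
      lt_of_not_ge fun h => hcl.not_ge (hl.trans ((ceilDiv_le_iff_le_mul hp).2 h))
    have hmul : p * c < p * l := Nat.mul_lt_mul_of_pos_left hcl hp
    exact iff_of_false (by lia) (by lia)

end ZeroDelay

section Invariant

variable {p k z n n' : ℕ}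

/-- A complete invariant of the left quotient of `mulThueMorse (k * 2 ^ z)` in base `2 ^ p` by a
word of value `n`: it consists of `n % k`, the parity of `n / k`, and the zero delay of `n`. -/
noncomputable def valQuotInvariant (p k z n : ℕ) : ℕ × ZMod 2 × ℕ :=
  (n % k, sTM (n / k), zeroDelay (2 ^ p) (mulThueMorse (k * 2 ^ z)) n)

theorem mod_eq_and_sTM_div_eq_of_valQuot_eq (hp : 0 < p) (hk : Odd k)
    (h : valQuot (2 ^ p) (mulThueMorse (k * 2 ^ z)) n =
      valQuot (2 ^ p) (mulThueMorse (k * 2 ^ z)) n') :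
    n % k = n' % k ∧ sTM (n / k) = sTM (n' / k) := by
  set m := k * 2 ^ z with hmk
  have hm : 0 < m := Nat.mul_pos hk.pos (Nat.two_pow_pos z)
  set N := p * (3 * m) with hN
  have hmN : 3 * m < 2 ^ N :=
    Nat.lt_two_pow_self.trans_le (Nat.pow_le_pow_right two_pos (Nat.le_mul_of_pos_left _ hp))
  have hzN : z ≤ N := by
    refine ((Nat.pow_lt_pow_iff_right one_lt_two).1 (lt_of_le_of_lt ?_ hmN)).le
    calc
      2 ^ z ≤ m := Nat.le_mul_of_pos_left _ hk.pos
      _ ≤ 3 * m := Nat.le_mul_of_pos_left _ three_pos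
  obtain ⟨x, ⟨hnx, hxn⟩, hx⟩ := exists_mem_Icc_mem_mulThueMorse hm (n * 2 ^ N)
  obtain ⟨v, rfl⟩ := Nat.exists_eq_add_of_le hnx
  have hv : v < 2 ^ N := by lia
  have hx' : n' * 2 ^ N + v ∈ mulThueMorse m := by
    rw [hN, pow_mul] at hv hx ⊢
    exact ((valQuot_eq_iff (Nat.one_lt_two_pow hp.ne')).1 h _ v hv).1 hx
  have hmod : n % k = n' % k := mod_eq_mod_of_mem_mulThueMorse hk hx hx'
  rw [hmk, mul_two_pow_add_mem_mulThueMorse hk.pos hzN hv] at hx hx'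
  exact ⟨hmod, by rw [← hx.2, ← hx'.2, hmod]⟩

theorem valQuot_eq_iff_valQuotInvariant_eq (hp : 0 < p) (hk : Odd k) :
    valQuot (2 ^ p) (mulThueMorse (k * 2 ^ z)) n =
        valQuot (2 ^ p) (mulThueMorse (k * 2 ^ z)) n' ↔
      valQuotInvariant p k z n = valQuotInvariant p k z n' := by
  have hb : 1 < 2 ^ p := Nat.one_lt_two_pow hp.ne'
  simp only [valQuotInvariant, Prod.mk.injEq]
  constructor
  · intro h
    obtain ⟨hmod, hparity⟩ := mod_eq_and_sTM_div_eq_of_valQuot_eq hp hk h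
    exact ⟨hmod, hparity, zeroDelay_eq_of_valQuot_eq hb h⟩
  · rintro ⟨hmod, hparity, hdelay⟩
    rw [valQuot_eq_iff hb]
    intro l v hv
    rcases le_total z (p * l) with hzl | hlz
    · rw [← pow_mul] at hv ⊢
      rw [mul_two_pow_add_mem_mulThueMorse hk.pos hzl hv,
        mul_two_pow_add_mem_mulThueMorse hk.pos hzl hv, hmod, hparity]
    · have hdvd : (2 ^ p) ^ l ∣ k * 2 ^ z := by
        rw [← pow_mul]
        exact (pow_dvd_pow 2 hlz).mul_left k
      have hzeros : n * (2 ^ p) ^ l ∈ mulThueMorse (k * 2 ^ z) ↔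
          n' * (2 ^ p) ^ l ∈ mulThueMorse (k * 2 ^ z) := by
        simp only [mul_pow_mem_mulThueMorse_iff hp hk, mem_mulThueMorse hk.pos,
          Nat.dvd_iff_mod_eq_zero, hmod, hparity, hdelay]
      constructor <;> intro h <;> obtain rfl := eq_zero_of_mul_add_mem_mulThueMorse hdvd hv h
      · exact hzeros.1 h
      · exact hzeros.2 h

theorem exists_valQuotInvariant_eq {i : ℕ} (hk : Odd k) (hi : i < k) (e : ZMod 2) :
    ∃ n, valQuotInvariant p k z n = (i, e, 0) := by
  have hmod : (i + k * e.val) % k = i := by rw [Nat.add_mul_mod_self_left, Nat.mod_eq_of_lt hi]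
  have hdiv : (i + k * e.val) / k = e.val := by
    rw [Nat.add_mul_div_left _ _ hk.pos, Nat.div_eq_of_lt hi, zero_add]
  have hparity : sTM e.val = e := by
    fin_cases e
    exacts [sTM_zero, sTM_one]
  have hdelay : zeroDelay (2 ^ p) (mulThueMorse (k * 2 ^ z)) (i + k * e.val) = 0 := by
    by_cases hn : i + k * e.val ∈ mulThueMorse k
    · rw [mem_mulThueMorse hk.pos, Nat.dvd_iff_mod_eq_zero, hmod, hdiv, hparity] at hn
      obtain ⟨rfl, rfl⟩ := hn
      exact zeroDelay_zero _ _
    · exact zeroDelay_of_notMem hk hn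
  exact ⟨i + k * e.val, by rw [valQuotInvariant, hmod, hdiv, hparity, hdelay]⟩

theorem range_valQuotInvariant (hp : 0 < p) (hk : Odd k) :
    Set.range (valQuotInvariant p k z) =
      ((Finset.range k ×ˢ Finset.univ ×ˢ {0}) ∪ ({0} ×ˢ {0} ×ˢ Finset.Icc 1 (z ⌈/⌉ p)) :
        Finset (ℕ × ZMod 2 × ℕ)) := by
  ext ⟨i, e, l⟩
  simp only [Set.mem_range, Finset.mem_coe, Finset.mem_union, Finset.mem_product, Finset.mem_range,
    Finset.mem_univ, Finset.mem_singleton, Finset.mem_Icc, true_and]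
  constructor
  · rintro ⟨n, hn⟩
    simp only [valQuotInvariant, Prod.mk.injEq] at hn
    obtain ⟨rfl, rfl, rfl⟩ := hn
    have hi : n % k < k := Nat.mod_lt n hk.pos
    by_cases h0 : zeroDelay (2 ^ p) (mulThueMorse (k * 2 ^ z)) n = 0
    · exact Or.inl ⟨hi, h0⟩
    · have hn : n ∈ mulThueMorse k := by_contra fun hn => h0 (zeroDelay_of_notMem hk hn)
      obtain ⟨hdvd, hs⟩ := (mem_mulThueMorse hk.pos).1 hn
      exact Or.inr ⟨Nat.mod_eq_zero_of_dvd hdvd, hs, Nat.one_le_iff_ne_zero.2 h0,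
        zeroDelay_le_ceilDiv hp hk⟩
  · rintro (⟨hi, rfl⟩ | ⟨rfl, rfl, -, hl⟩)
    · exact exists_valQuotInvariant_eq hk hi e
    · refine ⟨k * (2 ^ (z - p * l) * 3), ?_⟩
      simp only [valQuotInvariant, Nat.mul_mod_right, Nat.mul_div_cancel_left _ hk.pos,
        sTM_two_pow_mul, sTM_three, zeroDelay_mul_two_pow_mul hp hk (by decide : Odd 3) sTM_three,
        sub_sub_mul_ceilDiv hp hl]

theorem ncard_range_valQuotInvariant (hp : 0 < p) (hk : Odd k) :
    (Set.range (valQuotInvariant p k z)).ncard = 2 * k + z ⌈/⌉ p := by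
  rw [range_valQuotInvariant hp hk, Set.ncard_coe_finset, Finset.card_union_of_disjoint]
  · simp [ZMod.card, mul_comm]
  · rw [Finset.disjoint_left]
    rintro ⟨i, e, l⟩ hl₀ hl₁
    simp only [Finset.mem_product, Finset.mem_singleton, Finset.mem_Icc] at hl₀ hl₁
    lia

end Invariant

theorem state_complexity_of_mT (p m k z : ℕ) (hp : 1 ≤ p) (hm : 1 ≤ m)
    (hk : Odd k) (hmk : m = k * 2 ^ z)
    (L : Set (List (Fin (2 ^ p))))
    (hL : L = {w | ∃ t ∈ ThueMorse, valb (2 ^ p) w = m * t}) :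
    {Q | ∃ w : List (Fin (2 ^ p)), Q = leftQuot L w}.ncard = 2 * k + (z + p - 1) / p := by
  have hL' : L = {w | valb (2 ^ p) w ∈ mulThueMorse (k * 2 ^ z)} := by rw [hL, hmk]; rfl
  have hker : Setoid.ker (valQuot (2 ^ p) (mulThueMorse (k * 2 ^ z))) =
      Setoid.ker (valQuotInvariant p k z) :=
    Setoid.ext fun _ _ => valQuot_eq_iff_valQuotInvariant_eq hp hk
  rw [hL', setOf_leftQuot_eq_range_valQuot (Nat.one_lt_two_pow (by lia)),
    ncard_range_eq_of_ker_eq hker, ncard_range_valQuotInvariant hp hk,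
    Nat.ceilDiv_eq_add_pred_div]
end

section
/- Let p ≥ 1. For every word w over the alphabet {0,…,2^p−1}, the parity s(val_{2^p}(w)) equals the sum over all letters d of w of the parities s(d), computed in ZMod 2. In particular, val_{2^p}(w) belongs to the Thue–Morse set if and only if the total number of 1s occurring in the binary expansions of the letters of w is even. -/
/-! The binary expansion of `val_{2^p}(w)` is, up to leading zeros, the concatenation of the
expansions of the letters of `w`, each padded with zeros to length `p`. Zeros contribute no 1s, so
the numbers of 1s add up exactly, not only modulo 2. -/

section Digits

variable {b c : ℕ}

theorem count_digits_pow_mul_add (hb : 1 < b) (hc : c ≠ 0) {p d : ℕ} (hd : d < b ^ p) (a : ℕ) :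
    (Nat.digits b (b ^ p * a + d)).count c =
      (Nat.digits b a).count c + (Nat.digits b d).count c := by
  rcases Nat.eq_zero_or_pos a with rfl | ha
  · simp
  · have hlen : (Nat.digits b d).length ≤ p := (Nat.digits_length_le_iff hb d).2 hd
    have hdigits : Nat.digits b (b ^ p * a + d) =
        Nat.digits b d ++ List.replicate (p - (Nat.digits b d).length) 0 ++ Nat.digits b a := by
      rw [Nat.digits_append_zeroes_append_digits hb ha, Nat.add_sub_cancel' hlen, add_comm]
    have hzeros (k : ℕ) : (List.replicate k 0).count c = 0 :=
      List.count_eq_zero.2 fun h => hc (List.eq_of_mem_replicate h)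
    rw [hdigits, List.count_append, List.count_append, hzeros, add_zero, add_comm]

theorem valb_append_singleton (w : List (Fin b)) (d : Fin b) :
    valb b (w ++ [d]) = b * valb b w + d := by
  rw [valb, List.foldl_concat, valb]

theorem count_digits_valb_pow (hb : 1 < b) (hc : c ≠ 0) {p : ℕ} (w : List (Fin (b ^ p))) :
    (Nat.digits b (valb (b ^ p) w)).count c =
      (w.map fun d => (Nat.digits b d.val).count c).sum := by
  induction w using List.reverseRecOn with
  | nil => simp [valb]
  | append_singleton w d ih =>
    rw [valb_append_singleton, count_digits_pow_mul_add hb hc d.isLt, ih,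
      List.map_append, List.sum_append, List.map_singleton, List.sum_singleton]

end Digits

theorem mem_thueMorse_iff_even {n : ℕ} : n ∈ ThueMorse ↔ Even ((Nat.digits 2 n).count 1) :=
  ZMod.natCast_eq_zero_iff_even

theorem sTM_valb (p : ℕ) (hp : 1 ≤ p) (w : List (Fin (2 ^ p))) :
    sTM (valb (2 ^ p) w) = (w.map (fun d => sTM d.val)).sum ∧
    (valb (2 ^ p) w ∈ ThueMorse ↔
      Even ((w.map (fun d => (Nat.digits 2 d.val).count 1)).sum)) := by
  have hcount := count_digits_valb_pow one_lt_two one_ne_zero w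
  constructor
  · simp only [sTM, hcount, Nat.cast_list_sum, List.map_map, Function.comp_def]
  · rw [mem_thueMorse_iff_even, hcount]
end

section
/- Let p ≥ 1, z ∈ ℕ, and let k be an odd integer with k ≥ 2; set m = k·2^z. Let n ∈ ℕ satisfy p·n ≥ z, let L be the number of digits of the base-2^p expansion of m (in Lean, L = (Nat.digits (2^p) m).length), and for j < k define σ(j) = (−j·2^{pn−z}) mod k. Then for all j, j' < k: k·2^z divides j'·2^{p(n+L)} + σ(j)·2^{z+pL} if and only if j = j'. -/
/-!
The sum equals `(j' * 2 ^ (p * n - z) + σ j) * 2 ^ (p * L) * 2 ^ z`. The factor `2 ^ z` cancels and,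
`k` being odd, `2 ^ (p * L)` does not affect divisibility by `k`. Since
`σ j ≡ -j * 2 ^ (p * n - z)` modulo `k`, what remains is `(j' - j) * 2 ^ (p * n - z)`, and the power
of two is a unit modulo `k`. The same argument works for any base coprime to `k`.
-/

theorem dvd_mul_add_iff_dvd_sub_of_isCoprime {R : Type*} [CommRing R] {k x y c r : R}
    (hkc : IsCoprime k c) (hr : k ∣ r + x * c) : k ∣ y * c + r ↔ k ∣ y - x := by
  have hsplit : y * c + r = (y - x) * c + (r + x * c) := by ring
  rw [hsplit, dvd_add_left hr]
  exact ⟨hkc.dvd_of_dvd_mul_right, fun h ↦ h.mul_right c⟩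

theorem dvd_toNat_neg_emod_add {k : ℤ} (hk : k ≠ 0) (a : ℤ) : k ∣ ((-a % k).toNat : ℤ) + a := by
  rw [Int.toNat_of_nonneg (Int.emod_nonneg _ hk), ← sub_neg_eq_add]
  exact Int.dvd_emod_sub_self

theorem sigma_word_rep_accepted_iff_general {b k z N M : ℕ} (hb : 0 < b) (hk : k ≠ 0)
    (hkb : k.Coprime b) (hN : z ≤ N) {σ : ℕ → ℕ}
    (hσ : ∀ j, σ j = ((-(j * b ^ (N - z) : ℤ)) % (k : ℤ)).toNat) (j j' : ℕ) :
    k * b ^ z ∣ j' * b ^ (N + M) + σ j * b ^ (z + M) ↔ j ≡ j' [MOD k] := by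
  have hfactor : j' * b ^ (N + M) + σ j * b ^ (z + M) =
      (j' * b ^ (N - z) + σ j) * b ^ M * b ^ z := by
    obtain ⟨e, rfl⟩ := Nat.exists_eq_add_of_le hN
    rw [Nat.add_sub_cancel_left]
    ring
  have hresidue : (k : ℤ) ∣ σ j + j * b ^ (N - z) := by
    rw [hσ]
    exact dvd_toNat_neg_emod_add (Nat.cast_ne_zero.mpr hk) _
  have hcoprime : IsCoprime (k : ℤ) (b ^ (N - z)) := hkb.isCoprime.pow_right
  calc k * b ^ z ∣ j' * b ^ (N + M) + σ j * b ^ (z + M)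
      ↔ k ∣ (j' * b ^ (N - z) + σ j) * b ^ M := by
        rw [hfactor, Nat.mul_dvd_mul_iff_right (pow_pos hb z)]
    _ ↔ k ∣ j' * b ^ (N - z) + σ j := (hkb.pow_right M).dvd_mul_right
    _ ↔ (k : ℤ) ∣ j' * b ^ (N - z) + σ j := by exact_mod_cast Int.natCast_dvd_natCast.symm
    _ ↔ (k : ℤ) ∣ j' - j := dvd_mul_add_iff_dvd_sub_of_isCoprime hcoprime hresidue
    _ ↔ j ≡ j' [MOD k] := Nat.modEq_iff_dvd.symm

theorem sigma_word_rep_accepted_iff (p z k n : ℕ) (hp : 1 ≤ p) (hkodd : Odd k) (hk : 2 ≤ k)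
    (m : ℕ) (hm : m = k * 2 ^ z) (hn : z ≤ p * n)
    (L : ℕ) (hL : L = (Nat.digits (2 ^ p) m).length)
    (σ : ℕ → ℕ) (hσ : ∀ j, σ j = ((-(j * 2 ^ (p * n - z) : ℤ)) % (k : ℤ)).toNat) :
    ∀ j j', j < k → j' < k →
      ((k * 2 ^ z ∣ j' * 2 ^ (p * (n + L)) + σ j * 2 ^ (z + p * L)) ↔ j = j') := by
  intro j j' hj hj'
  rw [mul_add p, sigma_word_rep_accepted_iff_general two_pos hkodd.pos.ne'
    hkodd.coprime_two_right hn hσ]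
  exact ⟨fun h ↦ h.eq_of_lt_of_lt hj hj', fun h ↦ h ▸ rfl⟩
end

section
/- Let p ≥ 1 and m = k·2^z with k odd. Let j be an integer with 1 ≤ j ≤ k−1, let x ∈ ZMod 2, and let ℓ be an integer with 0 ≤ ℓ ≤ 2^z−1. Then for all n ∈ ℕ and all e < 2^{pn}: [m divides 2^{pn}·j + e and s((2^{pn}·j + e)/m) = x] if and only if [m divides 2^{pn}·(j + k·ℓ) + e and s((2^{pn}·(j + k·ℓ) + e)/m) = x + s(ℓ)]. [This shows that in the projected automaton Π(A_{m,2^p} × A_{T,2^p}) the states (j, X) and (j + kℓ, X_ℓ) accept the same language.] -/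
/-!
Appending a word of length `N` and value `e` to the state `i` yields the number `2 ^ N * i + e`.
If `z ≤ N`, replacing `j` by `j + k * ℓ` adds `2 ^ (N - z) * ℓ` to the quotient by `k * 2 ^ z`.
For `j < k` the original quotient is below `2 ^ (N - z)`, so the binary expansion of `ℓ` is
prepended to it and the parities add up. If `N ≤ z`, divisibility by `k * 2 ^ z` forces `e = 0` and
hence `k ∣ j`, which is impossible for `0 < j < k`: neither state accepts anything.
-/

section Digits

variable {b a q : ℕ}

theorem count_digits_add_pow_mul {d : ℕ} (hb : 1 < b) (hd : d ≠ 0) (hq : q < b ^ a) (l : ℕ) :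
    (b.digits (q + b ^ a * l)).count d = (b.digits q).count d + (b.digits l).count d := by
  rcases l.eq_zero_or_pos with rfl | hl
  · simp
  · have hlen : (b.digits q).length ≤ a := (Nat.digits_length_le_iff hb q).2 hq
    have happend := Nat.digits_append_zeroes_append_digits
      (k := a - (b.digits q).length) (n := q) hb hl
    rw [Nat.add_sub_cancel' hlen] at happend
    simp [← happend, List.count_replicate, hd.symm]

theorem sTM_add_two_pow_mul (hq : q < 2 ^ a) (l : ℕ) :
    sTM (q + 2 ^ a * l) = sTM q + sTM l := by
  simp only [sTM, count_digits_add_pow_mul one_lt_two one_ne_zero hq, Nat.cast_add]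

end Digits

section Divisibility

variable {b k z N j e : ℕ}

theorem pow_mul_add_lt_pow_mul (hj : j < k) (he : e < b ^ N) : b ^ N * j + e < b ^ N * k :=
  calc
    b ^ N * j + e < b ^ N * (j + 1) := by rw [mul_add_one]; gcongr
    _ ≤ b ^ N * k := by gcongr; exact hj

theorem pow_mul_add_div_lt_pow (hz : z ≤ N) (hj : j < k) (he : e < b ^ N) :
    (b ^ N * j + e) / (k * b ^ z) < b ^ (N - z) := by
  refine Nat.div_lt_of_lt_mul ?_
  calc
    b ^ N * j + e < b ^ N * k := pow_mul_add_lt_pow_mul hj he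
    _ = k * b ^ z * b ^ (N - z) := by rw [mul_assoc, pow_mul_pow_sub b hz, mul_comm]

theorem pow_mul_add_mul_add (hz : z ≤ N) (l : ℕ) :
    b ^ N * (j + k * l) + e = b ^ N * j + e + k * b ^ z * (b ^ (N - z) * l) := by
  rw [← pow_mul_pow_sub b hz]
  ring

theorem dvd_of_mul_pow_dvd_pow_mul_add (hN : N ≤ z) (he : e < b ^ N)
    (h : k * b ^ z ∣ b ^ N * j + e) : k ∣ j := by
  have hdvd : b ^ N * k ∣ b ^ N * j + e :=
    (mul_comm k (b ^ N) ▸ mul_dvd_mul_left k (pow_dvd_pow b hN)).trans h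
  have he_dvd : b ^ N ∣ e :=
    (Nat.dvd_add_right (dvd_mul_right _ _)).1 ((dvd_mul_right _ _).trans hdvd)
  obtain rfl : e = 0 := Nat.eq_zero_of_dvd_of_lt he_dvd he
  exact Nat.dvd_of_mul_dvd_mul_left he hdvd

end Divisibility

theorem class_jX_indistinguishable_general {m k z : ℕ} (hm : m = k * 2 ^ z)
    {j : ℕ} (hj_pos : 0 < j) (hj_lt : j < k) (x : ZMod 2) (ℓ : ℕ) {N e : ℕ} (he : e < 2 ^ N) :
    (m ∣ 2 ^ N * j + e ∧ sTM ((2 ^ N * j + e) / m) = x) ↔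
      (m ∣ 2 ^ N * (j + k * ℓ) + e ∧ sTM ((2 ^ N * (j + k * ℓ) + e) / m) = x + sTM ℓ) := by
  subst hm
  rcases le_total z N with hz | hN
  · have hm_pos : 0 < k * 2 ^ z := Nat.mul_pos (hj_pos.trans hj_lt) (Nat.two_pow_pos z)
    rw [pow_mul_add_mul_add hz, Nat.dvd_add_left (dvd_mul_right _ _),
      Nat.add_mul_div_left _ _ hm_pos,
      sTM_add_two_pow_mul (pow_mul_add_div_lt_pow hz hj_lt he), add_left_inj]
  · have hkj : ¬ k ∣ j := Nat.not_dvd_of_pos_of_lt hj_pos hj_lt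
    have hkjℓ : ¬ k ∣ j + k * ℓ := by rwa [Nat.dvd_add_left (dvd_mul_right k ℓ)]
    exact iff_of_false (fun h ↦ hkj (dvd_of_mul_pow_dvd_pow_mul_add hN he h.1))
      (fun h ↦ hkjℓ (dvd_of_mul_pow_dvd_pow_mul_add hN he h.1))

theorem class_jX_indistinguishable (p m k z : ℕ) (hp : 1 ≤ p) (hkodd : Odd k)
    (hm : m = k * 2 ^ z)
    (j : ℕ) (hj1 : 1 ≤ j) (hj2 : j ≤ k - 1) (x : ZMod 2)
    (ℓ : ℕ) (hℓ : ℓ ≤ 2 ^ z - 1) :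
    ∀ n e : ℕ, e < 2 ^ (p * n) →
      ((m ∣ 2 ^ (p * n) * j + e ∧ sTM ((2 ^ (p * n) * j + e) / m) = x) ↔
       (m ∣ 2 ^ (p * n) * (j + k * ℓ) + e ∧
         sTM ((2 ^ (p * n) * (j + k * ℓ) + e) / m) = x + sTM ℓ)) :=
  fun _ _ he ↦ class_jX_indistinguishable_general hm hj1 (by lia) x ℓ he
end

section
/- Let p ≥ 1 and m = k·2^z with k odd and z ≥ 1. Let β = ⌈z/p⌉ − 1 and let c ∈ [1, z − βp − 1]. Then for all n ∈ ℕ and all e < 2^{pn}: [m divides 2^{pn}·k·2^{z−βp−1} + e and s((2^{pn}·k·2^{z−βp−1} + e)/m) = 1] if and only if [m divides 2^{pn}·k·2^{z−(βp+c)−1} + e and s((2^{pn}·k·2^{z−(βp+c)−1} + e)/m) = 1]. [This shows that all states of the last class Γ_{⌈z/p⌉−1} of the projected automaton are indistinguishable.] -/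
/-!
Reading an `N`-bit word of value `e` from the state `i` computes `2 ^ N * i + e`. Let the modulus
be `k * 2 ^ z` and the state `k * i` with `0 < i < 2 ^ (z - β * p)`. If `N ≤ β * p`, the number
computed is positive but smaller than the modulus, so nothing is accepted. If `N ≥ z`, the bits of
the quotient are those of `i` followed by those of `e / (k * 2 ^ z)`, so only the parity of `i`
matters. For `β = ⌈z / p⌉ - 1` no multiple `N = p * n` lies strictly between `β * p` and `z`, and
all powers of two have parity `1`.
-/

theorem sTM_two_pow_mul_add_s14 {t q : ℕ} (hq : q < 2 ^ t) (i : ℕ) :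
    sTM (2 ^ t * i + q) = sTM i + sTM q := by
  obtain rfl | hi := Nat.eq_zero_or_pos i
  · simp [sTM]
  · have hlen : (Nat.digits 2 q).length ≤ t :=
      (Nat.digits_length_le_iff one_lt_two q).2 hq
    have hdigits := Nat.digits_append_zeroes_append_digits
      (k := t - (Nat.digits 2 q).length) (n := q) one_lt_two hi
    rw [Nat.add_sub_cancel' hlen, add_comm q] at hdigits
    rw [sTM, ← hdigits]
    simp [sTM, List.count_replicate, add_comm]

theorem sTM_two_pow (a : ℕ) : sTM (2 ^ a) = 1 := by
  simpa [sTM] using sTM_two_pow_mul_add_s14 (Nat.two_pow_pos a) 1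

/-- Acceptance, from the state `(i, x)` of the projected product automaton for the modulus `m`, of a
word with value `e`. The parameter `N` is the length of the word in bits, that is `p * n` for `n`
letters in base `2 ^ p`. -/
def AcceptsFrom (m i : ℕ) (x : ZMod 2) (N e : ℕ) : Prop :=
  m ∣ 2 ^ N * i + e ∧ sTM ((2 ^ N * i + e) / m) = x

section

variable {k z N i e : ℕ}

theorem not_acceptsFrom_of_lt (hk : 0 < k) (hi : 0 < i) (hiz : i < 2 ^ (z - N)) (he : e < 2 ^ N)
    (x : ZMod 2) : ¬ AcceptsFrom (k * 2 ^ z) (k * i) x N e := by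
  have hNz : N ≤ z := by
    by_contra! hzN
    rw [Nat.sub_eq_zero_of_le hzN.le, pow_zero] at hiz
    omega
  have hlt : 2 ^ N * (k * i) + e < k * 2 ^ z :=
    calc 2 ^ N * (k * i) + e < 2 ^ N * (k * i) + k * 2 ^ N := by
          gcongr
          exact he.trans_le (Nat.le_mul_of_pos_left _ hk)
      _ = k * (2 ^ N * (i + 1)) := by ring
      _ ≤ k * (2 ^ N * 2 ^ (z - N)) := by gcongr; exact hiz
      _ = k * 2 ^ z := by rw [← pow_add, Nat.add_sub_cancel' hNz]
  exact fun h ↦ Nat.not_dvd_of_pos_of_lt (by positivity) hlt h.1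

theorem acceptsFrom_iff_of_le (hk : 0 < k) (hzN : z ≤ N) (he : e < 2 ^ N) (x : ZMod 2) :
    AcceptsFrom (k * 2 ^ z) (k * i) x N e ↔
      k * 2 ^ z ∣ e ∧ sTM i + sTM (e / (k * 2 ^ z)) = x := by
  have hm : 0 < k * 2 ^ z := by positivity
  have hfactor : 2 ^ N * (k * i) = k * 2 ^ z * (2 ^ (N - z) * i) := by
    rw [← Nat.sub_add_cancel hzN, pow_add, Nat.add_sub_cancel]
    ring
  have hquot : e / (k * 2 ^ z) < 2 ^ (N - z) := by
    rw [Nat.div_lt_iff_lt_mul hm]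
    calc e < 2 ^ (N - z) * 2 ^ z := by rwa [← pow_add, Nat.sub_add_cancel hzN]
      _ ≤ 2 ^ (N - z) * (k * 2 ^ z) := by gcongr; exact Nat.le_mul_of_pos_left _ hk
  rw [AcceptsFrom, hfactor, Nat.dvd_add_right (Nat.dvd_mul_right _ _), Nat.mul_add_div hm,
    sTM_two_pow_mul_add_s14 hquot]

end

theorem gamma_last_indistinguishable_general {p k z β i j : ℕ} (hk : 0 < k)
    (hz : z ≤ p * (β + 1)) (hi : 0 < i) (hiz : i < 2 ^ (z - β * p))
    (hj : 0 < j) (hjz : j < 2 ^ (z - β * p)) (hij : sTM i = sTM j) (x : ZMod 2)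
    {n e : ℕ} (he : e < 2 ^ (p * n)) :
    AcceptsFrom (k * 2 ^ z) (k * i) x (p * n) e ↔
      AcceptsFrom (k * 2 ^ z) (k * j) x (p * n) e := by
  obtain hn | hn := Nat.lt_or_ge β n
  · have hzN : z ≤ p * n := hz.trans (Nat.mul_le_mul_left p hn)
    rw [acceptsFrom_iff_of_le hk hzN he, acceptsFrom_iff_of_le hk hzN he, hij]
  · have hN : p * n ≤ β * p := mul_comm β p ▸ Nat.mul_le_mul_left p hn
    have hpow : 2 ^ (z - β * p) ≤ 2 ^ (z - p * n) :=
      Nat.pow_le_pow_right two_pos (Nat.sub_le_sub_left hN z)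
    exact iff_of_false (not_acceptsFrom_of_lt hk hi (hiz.trans_le hpow) he x)
      (not_acceptsFrom_of_lt hk hj (hjz.trans_le hpow) he x)

theorem le_mul_of_eq_ceilDiv_sub_one {p z β : ℕ} (hp : 0 < p) (hβ : β = (z + p - 1) / p - 1) :
    z ≤ p * (β + 1) := by
  rw [← ceilDiv_le_iff_le_mul hp, Nat.ceilDiv_eq_add_pred_div]
  omega

theorem gamma_last_indistinguishable (p m k z : ℕ) (hp : 1 ≤ p) (hkodd : Odd k) (hz : 1 ≤ z)
    (hm : m = k * 2 ^ z)
    (β : ℕ) (hβ : β = (z + p - 1) / p - 1)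
    (c : ℕ) (hc1 : 1 ≤ c) (hc2 : c + β * p + 1 ≤ z) :
    ∀ n e : ℕ, e < 2 ^ (p * n) →
      ((m ∣ 2 ^ (p * n) * (k * 2 ^ (z - β * p - 1)) + e ∧
          sTM ((2 ^ (p * n) * (k * 2 ^ (z - β * p - 1)) + e) / m) = 1) ↔
       (m ∣ 2 ^ (p * n) * (k * 2 ^ (z - (β * p + c) - 1)) + e ∧
          sTM ((2 ^ (p * n) * (k * 2 ^ (z - (β * p + c) - 1)) + e) / m) = 1)) := by
  intro n e he
  subst hm
  exact gamma_last_indistinguishable_general hkodd.pos (le_mul_of_eq_ceilDiv_sub_one hp hβ)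
    (by positivity) (Nat.pow_lt_pow_right one_lt_two (by omega))
    (by positivity) (Nat.pow_lt_pow_right one_lt_two (by omega))
    (by rw [sTM_two_pow, sTM_two_pow]) 1 he
end

section
/- Let p ≥ 1 and m = k·2^z with k odd and k ≥ 2. Let (j, x) and (j', x') be two distinct pairs, each belonging to the set ({1,…,k−1} × ZMod 2) ∪ {(0, 1)}. Then there exist n ∈ ℕ and e < 2^{pn} such that exactly one of the following two conditions holds: [m divides 2^{pn}·j + e and s((2^{pn}·j + e)/m) = x] and [m divides 2^{pn}·j' + e and s((2^{pn}·j' + e)/m) = x']. [This shows that the states (j,X) and (j',X') of the projected automaton are distinguishable.] -/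
/-!
The integers `2 * c` and `2 * c + 1` have opposite values of `sTM`, so any three consecutive
integers realise both parities. Hence, as soon as `3 * m ≤ b ^ n`, some word of length `n` over the
base-`b` digits, here `b = 2 ^ p`, is accepted from `(j, x)`. That word cannot also be accepted from
`(j', x')`: divisibility by `m` fixes the first component modulo `k`, because the base is invertible
modulo `k`, and the parity of the quotient then fixes the second.
-/

theorem sTM_two_mul (n : ℕ) : sTM (2 * n) = sTM n := by
  rcases Nat.eq_zero_or_pos n with rfl | hn
  · rfl
  · simp [sTM, Nat.digits_base_mul one_lt_two hn]

theorem sTM_two_mul_add_one (n : ℕ) : sTM (2 * n + 1) = sTM n + 1 := by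
  have hdigits : Nat.digits 2 (2 * n + 1) = 1 :: Nat.digits 2 n := by
    rw [add_comm, Nat.digits_add 2 one_lt_two 1 n one_lt_two (Or.inl one_ne_zero)]
  rw [sTM, hdigits]
  simp [sTM]

theorem exists_mem_Icc_sTM_eq (a : ℕ) (x : ZMod 2) : ∃ q ∈ Set.Icc a (a + 2), sTM q = x := by
  let c := (a + 1) / 2
  have zmod_two_cases : ∀ y : ZMod 2, y = x ∨ y + 1 = x := by decide +revert
  rcases zmod_two_cases (sTM c) with hx | hx
  · exact ⟨2 * c, ⟨by omega, by omega⟩, (sTM_two_mul c).trans hx⟩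
  · exact ⟨2 * c + 1, ⟨by omega, by omega⟩, (sTM_two_mul_add_one c).trans hx⟩

theorem exists_lt_dvd_add_and_sTM_div_eq {m : ℕ} (hm : m ≠ 0) (N : ℕ) (x : ZMod 2) :
    ∃ e < 3 * m, m ∣ N + e ∧ sTM ((N + e) / m) = x := by
  obtain ⟨q, ⟨hq_lower, hq_upper⟩, hqx⟩ := exists_mem_Icc_sTM_eq (N ⌈/⌉ m) x
  have hNq : N ≤ m * q := (ceilDiv_le_iff_le_mul hm.bot_lt).1 hq_lower
  obtain ⟨e, he⟩ := Nat.exists_eq_add_of_le hNq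
  refine ⟨e, ?_, ⟨q, he.symm⟩, by rwa [← he, Nat.mul_div_cancel_left q hm.bot_lt]⟩
  have hceil : m * (N ⌈/⌉ m) ≤ N + m - 1 := Nat.mul_div_le (N + m - 1) m
  have hmq : m * q ≤ m * (N ⌈/⌉ m) + 2 * m :=
    (Nat.mul_le_mul_left m hq_upper).trans_eq (by ring)
  omega

theorem modEq_of_dvd_mul_add {k N j j' e : ℕ} (hkN : k.Coprime N)
    (h : k ∣ N * j + e) (h' : k ∣ N * j' + e) : j ≡ j' [MOD k] := by
  have hadd : N * j + e ≡ N * j' + e [MOD k] := h.modEq_zero_nat.trans h'.zero_modEq_nat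
  exact (hadd.add_right_cancel' e).cancel_left_of_coprime hkN

theorem classes_jX_distinguishable_general {b m k : ℕ} (hb : 1 < b) (hkb : k.Coprime b)
    (hm : m ≠ 0) (hkm : k ∣ m) {j j' : ℕ} {x x' : ZMod 2} (hj : j < k) (hj' : j' < k)
    (hne : (j, x) ≠ (j', x')) :
    ∃ n e : ℕ, e < b ^ n ∧
      (m ∣ b ^ n * j + e ∧ sTM ((b ^ n * j + e) / m) = x) ∧
      ¬(m ∣ b ^ n * j' + e ∧ sTM ((b ^ n * j' + e) / m) = x') := by
  let n := 3 * m
  obtain ⟨e, he, hdvd, hx⟩ := exists_lt_dvd_add_and_sTM_div_eq hm (b ^ n * j) x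
  refine ⟨n, e, he.trans (Nat.lt_pow_self hb), ⟨hdvd, hx⟩, ?_⟩
  rintro ⟨hdvd', hx'⟩
  have hjj' : j = j' :=
    (modEq_of_dvd_mul_add (hkb.pow_right n) (hkm.trans hdvd) (hkm.trans hdvd')).eq_of_lt_of_lt
      hj hj'
  subst hjj'
  exact hne (by rw [← hx, hx'])

theorem classes_jX_distinguishable (p m k z : ℕ) (hp : 1 ≤ p) (hkodd : Odd k) (hk : 2 ≤ k)
    (hm : m = k * 2 ^ z)
    (j : ℕ) (x : ZMod 2) (j' : ℕ) (x' : ZMod 2)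
    (hjx : (1 ≤ j ∧ j ≤ k - 1) ∨ (j = 0 ∧ x = 1))
    (hjx' : (1 ≤ j' ∧ j' ≤ k - 1) ∨ (j' = 0 ∧ x' = 1))
    (hne : (j, x) ≠ (j', x')) :
    ∃ n e : ℕ, e < 2 ^ (p * n) ∧
      Xor' (m ∣ 2 ^ (p * n) * j + e ∧ sTM ((2 ^ (p * n) * j + e) / m) = x)
           (m ∣ 2 ^ (p * n) * j' + e ∧ sTM ((2 ^ (p * n) * j' + e) / m) = x') := by
  have hm0 : m ≠ 0 := hm ▸ by positivity
  obtain ⟨n, e, he, haccept, hreject⟩ := classes_jX_distinguishable_general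
    (Nat.one_lt_two_pow (by omega)) (hkodd.coprime_two_right.pow_right p) hm0
    (hm ▸ dvd_mul_right k (2 ^ z)) (by omega) (by omega) hne
  rw [← pow_mul] at he haccept hreject
  exact ⟨n, e, he, Or.inl ⟨haccept, hreject⟩⟩
end
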